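/- arXiv:1512.08287 — 2 statements merged into one kernel-verified Lean document; each statement's English description precedes it below -/
import Mathlib

section
/- Let $R_0$ be a commutative Noetherian domain, $\mathfrak{f} \geq 3$, $R = R_0[x_{i,j} : 1 \le i < j \le \mathfrak{f}]$, $\mathbf{X}$ the generic alternating matrix, $I = \operatorname{Pf}_4(\mathbf{X})$, $A = R/I$, and $A' = A/(x_{1,2}, x_{2,3}, x_{1,3})$. Let $N$ be the cokernel of the map $\bigwedge^3 \bar{F}^* \to \bar{F}^*$ (over $A$, with $\bar F = A^{\mathfrak{f}}$) whose matrix has columns $(0,\dots,0,x_{j,k},0,\dots,0,-x_{i,k},0,\dots,0,x_{i,j},0,\dots,0)^T$ indexed by $i<j<k$. Then there is an exact sequence of $A$-modules $0 \to N \to A^3 \xrightarrow{[x_{2,3}, -x_{1,3}, x_{1,2}]} A \to A' \to 0$, where the map $N \to A^3$ is induced by the first three rows of $-\mathbf{X}$. -/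
open CategoryTheory

noncomputable section
namespace AluffiStmt

universe u

/-- The index set for the entries of a generic `f × f` alternating matrix:
pairs `(i, j)` with `i < j`. -/
abbrev P2 (f : ℕ) := {p : Fin f × Fin f // p.1 < p.2}

/-- `l` is a (weakly) regular sequence on `R`: each entry is a nonzerodivisor
modulo the ideal generated by the previous entries. -/
def IsRegSeq (R : Type*) [CommRing R] (l : List R) : Prop :=
  ∀ (i : ℕ) (h : i < l.length) (x : R),
    l.get ⟨i, h⟩ * x ∈ Ideal.span {y | y ∈ l.take i} →
      x ∈ Ideal.span {y | y ∈ l.take i}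

/-- The grade of an ideal: the supremum of lengths of regular sequences on `R`
contained in `I`. -/
def grade {R : Type*} [CommRing R] (I : Ideal R) : ℕ :=
  sSup {n | ∃ l : List R, l.length = n ∧ (∀ r ∈ l, r ∈ I) ∧ IsRegSeq R l}

/-- Projective dimension at most `n`, expressed by vanishing of `Ext^i (M, -)`
for all `i > n`. -/
def projDimLE (R : Type u) [CommRing R] (M : ModuleCat.{u} R) (n : ℕ) : Prop :=
  ∀ (N : ModuleCat.{u} R) (i : ℕ), n < i →
    Subsingleton (((Ext R (ModuleCat.{u} R) i).obj (Opposite.op M)).obj N)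

/-- `M` has projective dimension exactly `n`. -/
def projDimEq (R : Type u) [CommRing R] (M : ModuleCat.{u} R) (n : ℕ) : Prop :=
  projDimLE R M n ∧ ∀ k : ℕ, projDimLE R M k → n ≤ k

/-- An ideal `I` is perfect if `grade I = pd_R (R/I)`. -/
def IsPerfectIdeal (R : Type u) [CommRing R] (I : Ideal R) : Prop :=
  projDimEq R (ModuleCat.of R (R ⧸ I)) (grade I)
/-- The `(i,j)` entry of the generic alternating matrix `X`. -/
def xv (R₀ : Type u) [CommRing R₀] (f : ℕ) (i j : Fin f) : MvPolynomial (P2 f) R₀ :=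
  if h : i < j then MvPolynomial.X ⟨(i, j), h⟩
  else if h : j < i then - MvPolynomial.X ⟨(j, i), h⟩ else 0

/-- The Pfaffian of the principal `4 × 4` submatrix of `X` with rows and
columns `i < j < k < l`. -/
def pf4 (R₀ : Type u) [CommRing R₀] (f : ℕ) (i j k l : Fin f) : MvPolynomial (P2 f) R₀ :=
  xv R₀ f i j * xv R₀ f k l - xv R₀ f i k * xv R₀ f j l + xv R₀ f i l * xv R₀ f j k

/-- The ideal `Pf₄(X)` generated by all `4 × 4` principal Pfaffians of the
generic alternating matrix `X`. -/
def Pf4 (R₀ : Type u) [CommRing R₀] (f : ℕ) : Ideal (MvPolynomial (P2 f) R₀) :=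
  Ideal.span {p | ∃ i j k l : Fin f, i < j ∧ j < k ∧ k < l ∧ p = pf4 R₀ f i j k l}

/-- Index set of strictly increasing triples `i < j < k` in `Fin f`,
indexing a basis of `⋀³F`. -/
abbrev T3 (f : ℕ) := {v : Fin f × Fin f × Fin f // v.1 < v.2.1 ∧ v.2.1 < v.2.2}

/-- The quotient ring `A = R/Pf₄(X)`. -/
abbrev Aring (R₀ : Type u) [CommRing R₀] (f : ℕ) :=
  MvPolynomial (P2 f) R₀ ⧸ Pf4 R₀ f

/-- The image of `x_{i,j}` in `A`. -/
def xA (R₀ : Type u) [CommRing R₀] (f : ℕ) (i j : Fin f) : Aring R₀ f :=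
  Ideal.Quotient.mk _ (xv R₀ f i j)

/-- The matrix of the map `d₁ : ⋀³F* → F*`: the column indexed by the triple
`i < j < k` is `(0,…,0,x_{j,k},0,…,0,-x_{i,k},0,…,0,x_{i,j},0,…,0)ᵀ`. -/
def M1 (R₀ : Type u) [CommRing R₀] (f : ℕ) : Matrix (Fin f) (T3 f) (Aring R₀ f) :=
  fun i v =>
    if i = v.1.1 then xA R₀ f v.1.2.1 v.1.2.2
    else if i = v.1.2.1 then - xA R₀ f v.1.1 v.1.2.2
    else if i = v.1.2.2 then xA R₀ f v.1.1 v.1.2.1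
    else 0

/-!
The ring `A` embeds into a polynomial ring by `x_{i,j} ↦ s_i t_j - s_j t_i`. Division by the
Pfaffians, for an order in which the nested products `x_{i,l} x_{j,k}` lead, shows that the
monomials without nested factors span `A`; their images are monic with distinct leading
exponents, hence linearly independent. In particular every `x_{i,j}` with `i ≠ j` is a
nonzerodivisor, over an arbitrary commutative ring.

Exactness at `F*`: let `N` be the cokernel of the first map and let `e_j ∈ N` be the classes of the
basis vectors. The relations of `N` say that the generic matrix bordered by the column `e` still
has vanishing Pfaffians over the square-zero extension `A ⊕ N`. If two rows of `X` annihilate `c`,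
then `∑ c_j x_{j,f+1} = 0` in the ring of the next size, because `x_{a,b}` is a nonzerodivisor and
`x_{a,b} x_{j,f+1} = x_{a,j} x_{b,f+1} - x_{a,f+1} x_{b,j}`; specializing the last column to `e`
gives `∑ c_j e_j = 0`.

Exactness at `A³`: setting the first row to zero shows that the first coordinate of a relation is a
combination of the entries of the first row. After subtracting it, the relation reads
`v x_{1,3} = w x_{1,2}`, and `x_{1,2}` divides `v` since both variables can be multiplied with any
standard monomial without leaving the standard ones.
-/

section Preliminaries

open MvPolynomial
open scoped MonomialOrder

theorem exists_lt_of_mapDomain_eq {ι κ : Type*} {g : ι → κ} {m m' : ι →₀ ℕ}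
    (h : m.mapDomain g = m'.mapDomain g) {p : ι} (hp : m p < m' p) :
    ∃ q, g q = g p ∧ m' q < m q := by
  classical
  by_contra! hle
  have fibre_sum {n : ι →₀ ℕ} (hn : n.support ⊆ m.support ∪ m'.support) :
      n.mapDomain g (g p) = ∑ q ∈ m.support ∪ m'.support, if g q = g p then n q else 0 := by
    simp only [Finsupp.mapDomain, Finsupp.sum_of_support_subset n hn, Finsupp.single_zero,
      implies_true, Finsupp.finsetSum_apply, Finsupp.single_apply]
  refine (DFunLike.congr_fun h (g p)).not_lt ?_
  rw [fibre_sum Finset.subset_union_left, fibre_sum Finset.subset_union_right]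
  refine Finset.sum_lt_sum (fun q _ => ?_) ⟨p, ?_, by simpa using hp⟩
  · split_ifs with hq
    exacts [hle q hq, le_rfl]
  · exact Finset.mem_union_right _ (Finsupp.mem_support_iff.mpr (Nat.ne_zero_of_lt hp))

theorem eq_of_isChain_support_of_mapDomain_eq {α β : Type*} [LinearOrder α] [LinearOrder β]
    {P : α × β → Prop} {m m' : Subtype P →₀ ℕ}
    (hm : IsChain (· ≤ ·) (m.support : Set (Subtype P)))
    (hm' : IsChain (· ≤ ·) (m'.support : Set (Subtype P)))
    (hfst : m.mapDomain (fun p => p.1.1) = m'.mapDomain (fun p => p.1.1))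
    (hsnd : m.mapDomain (fun p => p.1.2) = m'.mapDomain (fun p => p.1.2)) : m = m' := by
  classical
  by_contra hne
  have hdiff : (m.neLocus m').Nonempty := Finsupp.nonempty_neLocus_iff.mpr hne
  obtain ⟨p, hp, hmin⟩ := Finset.exists_min_image _ (fun p : Subtype P => toLex p.1) hdiff
  wlog hlt : m p < m' p generalizing m m'
  · rw [Finsupp.neLocus_comm] at hdiff hp hmin
    exact this hm' hm hfst.symm hsnd.symm (Ne.symm hne) hdiff hp hmin
      (lt_of_le_of_ne (not_lt.mp hlt) (Finsupp.mem_neLocus.mp hp))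
  obtain ⟨q, hqp, hq⟩ := exists_lt_of_mapDomain_eq hfst hlt
  obtain ⟨r, hrp, hr⟩ := exists_lt_of_mapDomain_eq hsnd hlt
  have hpq : p.1.2 < q.1.2 := by
    have hle := Prod.Lex.toLex_le_toLex.mp (hmin q (Finsupp.mem_neLocus.mpr hq.ne'))
    refine lt_of_le_of_ne (by grind) fun h => ?_
    rw [show q = p from Subtype.ext (Prod.ext hqp h.symm)] at hq
    exact hq.asymm hlt
  have hpr : p.1.1 < r.1.1 := by
    have hle := Prod.Lex.toLex_le_toLex.mp (hmin r (Finsupp.mem_neLocus.mpr hr.ne'))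
    refine lt_of_le_of_ne (by grind) fun h => ?_
    rw [show r = p from Subtype.ext (Prod.ext h.symm hrp)] at hr
    exact hr.asymm hlt
  have hqr := hm.total (Finsupp.mem_support_iff.mpr (Nat.ne_zero_of_lt hq))
    (Finsupp.mem_support_iff.mpr (Nat.ne_zero_of_lt hr))
  rcases hqr with h | h
  · exact (hrp ▸ h.2).not_gt hpq
  · exact (hqp ▸ h.1).not_gt hpr

theorem linearIndependent_of_monic_of_injective_degree {σ ι R : Type*} [CommRing R]
    (m : MonomialOrder σ) {g : ι → MvPolynomial σ R} (hg : ∀ i, m.Monic (g i))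
    (hinj : Function.Injective fun i => m.degree (g i)) : LinearIndependent R g := by
  rw [linearIndependent_iff]
  intro l hl
  by_contra hne
  obtain ⟨i, hi, hmax⟩ := Finset.exists_max_image l.support
    (fun i => m.toSyn (m.degree (g i))) (Finsupp.support_nonempty_iff.mpr hne)
  refine Finsupp.mem_support_iff.mp hi ?_
  calc l i = coeff (m.degree (g i)) (Finsupp.linearCombination R g l) := by
        rw [Finsupp.linearCombination_apply, Finsupp.sum, coeff_sum, Finset.sum_eq_single i]
        · rw [coeff_smul, (hg i).coeff_degree, smul_eq_mul, mul_one]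
        · intro j hj hji
          have hlt := lt_of_le_of_ne (hmax j hj) (m.toSyn.injective.ne (hinj.ne hji))
          rw [coeff_smul, MonomialOrder.coeff_eq_zero_of_lt hlt, smul_zero]
        · exact fun h => absurd hi h
    _ = 0 := by rw [hl, coeff_zero]

theorem lex_single_add_single_lt {σ : Type*} [LinearOrder σ] [WellFoundedGT σ] {a b c d : σ}
    (hac : a < c) (had : a < d) :
    Finsupp.single c 1 + Finsupp.single d 1 ≺[MonomialOrder.lex]
      Finsupp.single a 1 + Finsupp.single b 1 := by
  have hlt : Finsupp.single c 1 + Finsupp.single d 1 ≺[MonomialOrder.lex] Finsupp.single a 1 := by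
    rw [MonomialOrder.lex_lt_iff, Finsupp.Lex.lt_iff]
    refine ⟨a, fun j hj => ?_, ?_⟩
    · simp [hj.ne', (hj.trans hac).ne', (hj.trans had).ne']
    · simp [hac.ne', had.ne']
  refine hlt.trans_le ?_
  rw [map_add]
  exact le_add_of_nonneg_right (MonomialOrder.lex.zero_le _)

theorem X_dvd_of_X_dvd_mul_X {σ R : Type*} [CommSemiring R] {i j : σ} (hij : i ≠ j)
    {p : MvPolynomial σ R} (h : X i ∣ p * X j) : X i ∣ p := by
  classical
  obtain ⟨q, hq⟩ := h
  rw [X_dvd_iff_modMonomial_eq_zero]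
  ext m
  by_cases hm : Finsupp.single i 1 ≤ m
  · rw [coeff_modMonomial_of_le _ hm, coeff_zero]
  · have hi : m i = 0 := by simpa using hm
    rw [coeff_modMonomial_of_not_le _ hm, ← coeff_mul_X m j p, hq, coeff_X_mul']
    simp [hi, hij.symm]

theorem degree_X_mul_X {σ R : Type*} [CommSemiring R] [Nontrivial R] (m : MonomialOrder σ)
    (a b : σ) :
    m.degree (X a * X b : MvPolynomial σ R) = Finsupp.single a 1 + Finsupp.single b 1 := by
  classical
  rw [X, X, monomial_mul, one_mul, MonomialOrder.degree_monomial, if_neg one_ne_zero]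

theorem monic_X_mul_X {σ R : Type*} [CommSemiring R] (m : MonomialOrder σ) (a b : σ) :
    m.Monic (X a * X b : MvPolynomial σ R) :=
  MonomialOrder.monic_X.mul MonomialOrder.monic_X

theorem map_single_eq_smul {ι A N : Type*} [DecidableEq ι] [CommSemiring A] [AddCommMonoid N]
    [Module A N] (g : (ι → A) →ₗ[A] N) (i : ι) (y : A) :
    g (Pi.single i y) = y • g (Pi.single i 1) := by
  rw [← map_smul, ← Pi.single_smul, smul_eq_mul, mul_one]

end Preliminaries

section UniversalProperty

variable {R₀ : Type u} [CommRing R₀] {f : ℕ} {S : Type*} [CommRing S]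

/-- A point of the scheme `Spec A`: an alternating `f × f` matrix over `S` all of whose principal
`4 × 4` Pfaffians vanish. -/
structure IsPfaffianPoint (y : Fin f → Fin f → S) : Prop where
  diag (i : Fin f) : y i i = 0
  neg (i j : Fin f) : y j i = -y i j
  pfaffian {i j k l : Fin f} (hij : i < j) (hjk : j < k) (hkl : k < l) :
    y i j * y k l - y i k * y j l + y i l * y j k = 0

theorem xv_of_lt {i j : Fin f} (h : i < j) : xv R₀ f i j = MvPolynomial.X ⟨(i, j), h⟩ :=
  dif_pos h

theorem eval₂_xv (φ : R₀ →+* S) {y : Fin f → Fin f → S} (hdiag : ∀ i, y i i = 0)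
    (hneg : ∀ i j, y j i = -y i j) (i j : Fin f) :
    MvPolynomial.eval₂ φ (fun p : P2 f => y p.1.1 p.1.2) (xv R₀ f i j) = y i j := by
  rcases lt_trichotomy i j with h | rfl | h
  · rw [xv_of_lt h, MvPolynomial.eval₂_X]
  · simp [xv, hdiag]
  · rw [hneg j i, xv, dif_neg h.not_gt, dif_pos h, ← MvPolynomial.coe_eval₂Hom, map_neg,
      MvPolynomial.coe_eval₂Hom, MvPolynomial.eval₂_X]

/-- The ring homomorphism `A → S` that sends the generic matrix to a given point. -/
def lift (φ : R₀ →+* S) {y : Fin f → Fin f → S} (hy : IsPfaffianPoint y) : Aring R₀ f →+* S :=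
  Ideal.Quotient.lift (Pf4 R₀ f) (MvPolynomial.eval₂Hom φ fun p => y p.1.1 p.1.2) fun q hq => by
    refine (Ideal.span_le (I := RingHom.ker _)).mpr ?_ hq
    rintro _ ⟨i, j, k, l, hij, hjk, hkl, rfl⟩
    simpa [pf4, eval₂_xv φ hy.diag hy.neg] using hy.pfaffian hij hjk hkl

@[simp]
theorem lift_xA (φ : R₀ →+* S) {y : Fin f → Fin f → S} (hy : IsPfaffianPoint y) (i j : Fin f) :
    lift φ hy (xA R₀ f i j) = y i j :=
  eval₂_xv φ hy.diag hy.neg i j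

@[simp]
theorem lift_algebraMap (φ : R₀ →+* S) {y : Fin f → Fin f → S} (hy : IsPfaffianPoint y) (r : R₀) :
    lift φ hy (algebraMap R₀ (Aring R₀ f) r) = φ r :=
  MvPolynomial.eval₂_C _ _ r

theorem xA_of_lt {i j : Fin f} (h : i < j) :
    xA R₀ f i j = Ideal.Quotient.mk _ (MvPolynomial.X ⟨(i, j), h⟩) :=
  congrArg _ (xv_of_lt h)

theorem Aring_hom_ext {T : Type*} [Semiring T] {g h : Aring R₀ f →+* T}
    (halg : ∀ r, g (algebraMap R₀ _ r) = h (algebraMap R₀ _ r))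
    (hx : ∀ i j, g (xA R₀ f i j) = h (xA R₀ f i j)) : g = h := by
  refine Ideal.Quotient.ringHom_ext (MvPolynomial.ringHom_ext halg fun p => ?_)
  simpa only [RingHom.comp_apply, xA_of_lt p.2] using hx p.1.1 p.1.2

variable (R₀ f)

@[simp]
theorem xA_self (i : Fin f) : xA R₀ f i i = 0 := by
  simp [xA, xv]

theorem xA_swap (i j : Fin f) : xA R₀ f j i = -xA R₀ f i j := by
  rw [xA, xA, ← map_neg]
  congr 1
  rcases lt_trichotomy i j with h | rfl | h <;> simp [xv, *, not_lt_of_gt]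

end UniversalProperty

section StandardMonomials

open MvPolynomial
open scoped MonomialOrder

variable (R₀ : Type u) [CommRing R₀] {f : ℕ}

theorem isPfaffianPoint_minors {S : Type*} [CommRing S] (s t : Fin f → S) :
    IsPfaffianPoint fun i j => s i * t j - s j * t i where
  diag i := sub_self _
  neg i j := (neg_sub _ _).symm
  pfaffian _ _ _ := by ring

variable (f) in
/-- The homomorphism `x_{i,j} ↦ s_i t_j - s_j t_i` to the polynomial ring in two rows of
variables. The variables `s_i` come before the `t_j`, so that `s_i t_j` is the leading term for the
lexicographic order when `i < j`. -/
def plucker : Aring R₀ f →+* MvPolynomial (Fin f ⊕ₗ Fin f) R₀ :=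
  lift C (isPfaffianPoint_minors (fun i => X (Sum.inlₗ i)) fun j => X (Sum.inrₗ j))

/-- The exponent of the lexicographic leading term of the image under `plucker` of the monomial
with exponent `m`. -/
def pluckerDegree : (P2 f →₀ ℕ) →+ (Fin f ⊕ₗ Fin f) →₀ ℕ :=
  Finsupp.mapDomain.addMonoidHom (fun p => Sum.inlₗ p.1.1) +
    Finsupp.mapDomain.addMonoidHom fun p => Sum.inrₗ p.1.2

theorem pluckerDegree_single (p : P2 f) :
    pluckerDegree (Finsupp.single p 1) =
      Finsupp.single (Sum.inlₗ p.1.1) 1 + Finsupp.single (Sum.inrₗ p.1.2) 1 := by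
  simp [pluckerDegree, Finsupp.mapDomain_single]

theorem pluckerDegree_inl (m : P2 f →₀ ℕ) (i : Fin f) :
    pluckerDegree m (Sum.inlₗ i) = m.mapDomain (fun p => p.1.1) i := by
  have hinj : Function.Injective (Sum.inlₗ : Fin f → Fin f ⊕ₗ Fin f) :=
    toLex.injective.comp Sum.inl_injective
  rw [← Finsupp.mapDomain_apply hinj, ← Finsupp.mapDomain_comp]
  refine (congrArg (_ + ·) (Finsupp.mapDomain_of_notMem_range _ _ ?_)).trans (add_zero _)
  rintro ⟨p, hp⟩
  cases hp

theorem pluckerDegree_inr (m : P2 f →₀ ℕ) (j : Fin f) :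
    pluckerDegree m (Sum.inrₗ j) = m.mapDomain (fun p => p.1.2) j := by
  have hinj : Function.Injective (Sum.inrₗ : Fin f → Fin f ⊕ₗ Fin f) :=
    toLex.injective.comp Sum.inr_injective
  rw [← Finsupp.mapDomain_apply hinj, ← Finsupp.mapDomain_comp]
  refine (congrArg (· + _) (Finsupp.mapDomain_of_notMem_range _ _ ?_)).trans (zero_add _)
  rintro ⟨p, hp⟩
  cases hp

theorem degree_minor_lt [Nontrivial R₀] (p : P2 f) :
    MonomialOrder.lex.degree
        (X (Sum.inlₗ p.1.2) * X (Sum.inrₗ p.1.1) : MvPolynomial (Fin f ⊕ₗ Fin f) R₀)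
      ≺[MonomialOrder.lex]
    MonomialOrder.lex.degree
        (X (Sum.inlₗ p.1.1) * X (Sum.inrₗ p.1.2) : MvPolynomial (Fin f ⊕ₗ Fin f) R₀) := by
  rw [degree_X_mul_X, degree_X_mul_X]
  exact lex_single_add_single_lt (Sum.Lex.inl_lt_inl_iff.mpr p.2) (Sum.Lex.inl_lt_inr _ _)

theorem plucker_mk_X (p : P2 f) :
    plucker R₀ f (Ideal.Quotient.mk _ (X p)) =
      X (Sum.inlₗ p.1.1) * X (Sum.inrₗ p.1.2) - X (Sum.inlₗ p.1.2) * X (Sum.inrₗ p.1.1) := by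
  rw [← xA_of_lt p.2, plucker, lift_xA]

theorem degree_plucker_X [Nontrivial R₀] (p : P2 f) :
    MonomialOrder.lex.degree (plucker R₀ f (Ideal.Quotient.mk _ (X p))) =
      pluckerDegree (Finsupp.single p 1) := by
  rw [plucker_mk_X, MonomialOrder.degree_sub_of_lt (degree_minor_lt R₀ p), degree_X_mul_X,
    pluckerDegree_single]

theorem monic_plucker_X (p : P2 f) :
    MonomialOrder.lex.Monic (plucker R₀ f (Ideal.Quotient.mk _ (X p))) := by
  nontriviality R₀
  rw [plucker_mk_X, MonomialOrder.Monic,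
    MonomialOrder.leadingCoeff_sub_of_lt (degree_minor_lt R₀ p)]
  exact monic_X_mul_X _ _ _

theorem monic_plucker_monomial (m : P2 f →₀ ℕ) :
    MonomialOrder.lex.Monic (plucker R₀ f (Ideal.Quotient.mk _ (monomial m 1))) := by
  rw [monomial_eq, C_1, one_mul, Finsupp.prod, map_prod, map_prod]
  refine MonomialOrder.Monic.prod fun p _ => ?_
  rw [map_pow, map_pow]
  exact (monic_plucker_X R₀ p).pow

theorem degree_plucker_monomial [Nontrivial R₀] (m : P2 f →₀ ℕ) :
    MonomialOrder.lex.degree (plucker R₀ f (Ideal.Quotient.mk _ (monomial m 1))) =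
      pluckerDegree m := by
  induction m using Finsupp.induction_linear with
  | zero => simp
  | add m n hm hn =>
    have hreg := isRegular_one (R := R₀)
    rw [← monic_plucker_monomial R₀ m] at hreg
    rw [← one_mul (1 : R₀), ← monomial_mul, map_mul, map_mul,
      MonomialOrder.degree_mul_of_isRegular_left hreg
        (monic_plucker_monomial R₀ n).ne_zero, hm, hn, map_add]
  | single p k =>
    have hpow :
        MonomialOrder.lex.leadingCoeff (plucker R₀ f (Ideal.Quotient.mk _ (X p))) ^ k ≠ 0 := by
      rw [(monic_plucker_X R₀ p).leadingCoeff_eq_one, one_pow]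
      exact one_ne_zero
    rw [← X_pow_eq_monomial, map_pow, map_pow,
      MonomialOrder.degree_pow_of_pow_leadingCoeff_ne_zero hpow, degree_plucker_X, ← map_nsmul,
      Finsupp.smul_single_one]

/-- Standard exponents: the edges of the monomial form a chain in the product order, that is, no
two of them are nested. -/
def IsStandard (m : P2 f →₀ ℕ) : Prop :=
  IsChain (· ≤ ·) (m.support : Set (P2 f))

theorem IsStandard.eq_of_pluckerDegree_eq {m n : P2 f →₀ ℕ} (hm : IsStandard m)
    (hn : IsStandard n) (h : pluckerDegree m = pluckerDegree n) : m = n := by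
  refine eq_of_isChain_support_of_mapDomain_eq hm hn (Finsupp.ext fun i => ?_)
    (Finsupp.ext fun j => ?_)
  · rw [← pluckerDegree_inl, ← pluckerDegree_inl, h]
  · rw [← pluckerDegree_inr, ← pluckerDegree_inr, h]

theorem linearIndepOn_plucker_monomial :
    LinearIndepOn R₀ (fun m => plucker R₀ f (Ideal.Quotient.mk _ (monomial m 1)))
      {m | IsStandard m} := by
  nontriviality R₀
  refine linearIndependent_of_monic_of_injective_degree MonomialOrder.lex
    (fun m => monic_plucker_monomial R₀ m.1) fun m n hmn => Subtype.ext ?_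
  simp only [degree_plucker_monomial] at hmn
  exact m.2.eq_of_pluckerDegree_eq n.2 hmn

theorem plucker_monomial (m : P2 f →₀ ℕ) (c : R₀) :
    plucker R₀ f (Ideal.Quotient.mk _ (monomial m c)) =
      c • plucker R₀ f (Ideal.Quotient.mk _ (monomial m 1)) := by
  have hC : plucker R₀ f (Ideal.Quotient.mk _ (C c)) = C c := lift_algebraMap _ _ c
  rw [← mul_one c, ← C_mul_monomial, map_mul, map_mul, hC, mul_one, smul_eq_C_mul]

theorem eq_zero_of_plucker_mk_eq_zero {q : MvPolynomial (P2 f) R₀}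
    (hq : q ∈ restrictSupport R₀ {m : P2 f →₀ ℕ | IsStandard m})
    (h : plucker R₀ f (Ideal.Quotient.mk _ q) = 0) : q = 0 := by
  have hind := (linearIndepOn_plucker_monomial R₀).mono ((mem_restrictSupport_iff R₀).mp hq)
  have hsum : ∑ m ∈ q.support, coeff m q •
      plucker R₀ f (Ideal.Quotient.mk _ (monomial m 1)) = 0 := by
    rw [← h]
    conv_rhs => rw [q.as_sum]
    simp only [map_sum, plucker_monomial R₀ _ (coeff _ _)]
  ext m
  by_cases hm : m ∈ q.support
  · exact linearIndepOn_finset_iff.mp hind _ hsum m hm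
  · exact notMem_support_iff.mp hm

/-- The order of the variables for which `x_{i,j}` comes before `x_{k,l}` when `i < k`, or `i = k`
and `l < j`. -/
abbrev edgeOrder (f : ℕ) : LinearOrder (P2 f) :=
  LinearOrder.lift' (fun p => toLex (p.1.1, OrderDual.toDual p.1.2)) fun p q h => by
    simpa [Subtype.ext_iff, Prod.ext_iff] using h

/-- The lexicographic order attached to `edgeOrder`. It makes the nested product
`x_{i,l} x_{j,k}` the leading term of the Pfaffian on `i < j < k < l`. -/
def pfaffianOrder (f : ℕ) : MonomialOrder (P2 f) :=
  @MonomialOrder.lex (P2 f) (edgeOrder f) (@Finite.to_wellFoundedGT _ _ (edgeOrder f).toPreorder)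

theorem pfaffianOrder_single_add_single_lt {a b c d : P2 f} (hac : (edgeOrder f).lt a c)
    (had : (edgeOrder f).lt a d) :
    Finsupp.single c 1 + Finsupp.single d 1 ≺[pfaffianOrder f]
      Finsupp.single a 1 + Finsupp.single b 1 :=
  @lex_single_add_single_lt _ (edgeOrder f) (@Finite.to_wellFoundedGT _ _ (edgeOrder f).toPreorder)
    a b c d hac had

theorem edgeOrder_lt_of_fst_lt {p q : P2 f} (h : p.1.1 < q.1.1) : (edgeOrder f).lt p q :=
  Prod.Lex.toLex_lt_toLex.mpr (Or.inl h)

theorem edgeOrder_lt_of_snd_lt {p q : P2 f} (h₁ : p.1.1 = q.1.1) (h₂ : q.1.2 < p.1.2) :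
    (edgeOrder f).lt p q :=
  Prod.Lex.toLex_lt_toLex.mpr (Or.inr ⟨h₁, h₂⟩)

section

variable {i j k l : Fin f} (hij : i < j) (hjk : j < k) (hkl : k < l)
include hij hjk hkl

theorem pf4_of_lt :
    pf4 R₀ f i j k l =
      X ⟨(i, l), (hij.trans hjk).trans hkl⟩ * X ⟨(j, k), hjk⟩ -
        (X ⟨(i, k), hij.trans hjk⟩ * X ⟨(j, l), hjk.trans hkl⟩ -
          X ⟨(i, j), hij⟩ * X ⟨(k, l), hkl⟩) := by
  rw [pf4, xv_of_lt hij, xv_of_lt hkl, xv_of_lt (hij.trans hjk), xv_of_lt (hjk.trans hkl),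
    xv_of_lt ((hij.trans hjk).trans hkl), xv_of_lt hjk]
  ring

theorem degree_pf4_tail_lt [Nontrivial R₀] :
    (pfaffianOrder f).degree
        (X ⟨(i, k), hij.trans hjk⟩ * X ⟨(j, l), hjk.trans hkl⟩ -
          X ⟨(i, j), hij⟩ * X ⟨(k, l), hkl⟩ : MvPolynomial (P2 f) R₀)
      ≺[pfaffianOrder f]
    (pfaffianOrder f).degree
        (X ⟨(i, l), (hij.trans hjk).trans hkl⟩ * X ⟨(j, k), hjk⟩ : MvPolynomial (P2 f) R₀) := by
  refine MonomialOrder.degree_sub_le.trans_lt (max_lt ?_ ?_)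
  all_goals
    rw [degree_X_mul_X, degree_X_mul_X]
    apply pfaffianOrder_single_add_single_lt
  · exact edgeOrder_lt_of_snd_lt rfl hkl
  · exact edgeOrder_lt_of_fst_lt hij
  · exact edgeOrder_lt_of_snd_lt rfl (hjk.trans hkl)
  · exact edgeOrder_lt_of_fst_lt (hij.trans hjk)

theorem degree_pf4 [Nontrivial R₀] :
    (pfaffianOrder f).degree (pf4 R₀ f i j k l) =
      Finsupp.single ⟨(i, l), (hij.trans hjk).trans hkl⟩ 1 + Finsupp.single ⟨(j, k), hjk⟩ 1 := by
  rw [pf4_of_lt R₀ hij hjk hkl,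
    MonomialOrder.degree_sub_of_lt (degree_pf4_tail_lt R₀ hij hjk hkl), degree_X_mul_X]

theorem monic_pf4 : (pfaffianOrder f).Monic (pf4 R₀ f i j k l) := by
  nontriviality R₀
  rw [pf4_of_lt R₀ hij hjk hkl, MonomialOrder.Monic,
    MonomialOrder.leadingCoeff_sub_of_lt (degree_pf4_tail_lt R₀ hij hjk hkl)]
  exact monic_X_mul_X _ _ _

end

theorem isStandard_of_forall_not_le {m : P2 f →₀ ℕ}
    (h : ∀ p q : P2 f, p.1.1 < q.1.1 → q.1.2 < p.1.2 →
      ¬Finsupp.single p 1 + Finsupp.single q 1 ≤ m) : IsStandard m := by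
  classical
  have not_nested (p q : P2 f) (hp : p ∈ m.support) (hq : q ∈ m.support)
      (hfst : p.1.1 < q.1.1) : ¬q.1.2 < p.1.2 := by
    intro hsnd
    refine h p q hfst hsnd fun r => ?_
    have hpq : p ≠ q := fun hpq => hfst.ne (congrArg (·.1.1) hpq)
    rw [Finsupp.mem_support_iff] at hp hq
    simp only [Finsupp.add_apply, Finsupp.single_apply]
    grind
  intro p hp q hq _
  change (p.1.1 ≤ q.1.1 ∧ p.1.2 ≤ q.1.2) ∨ (q.1.1 ≤ p.1.1 ∧ q.1.2 ≤ p.1.2)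
  have hpq := not_nested p q hp hq
  have hqp := not_nested q p hq hp
  grind

theorem exists_standard_mk_eq (v : Aring R₀ f) :
    ∃ q ∈ restrictSupport R₀ {m : P2 f →₀ ℕ | IsStandard m}, Ideal.Quotient.mk _ q = v := by
  nontriviality R₀
  obtain ⟨p, rfl⟩ := Ideal.Quotient.mk_surjective v
  have hunit : ∀ b ∈ {p | ∃ i j k l : Fin f, i < j ∧ j < k ∧ k < l ∧ p = pf4 R₀ f i j k l},
      IsUnit ((pfaffianOrder f).leadingCoeff b) := by
    rintro _ ⟨i, j, k, l, hij, hjk, hkl, rfl⟩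
    exact (monic_pf4 R₀ hij hjk hkl).leadingCoeff_eq_one ▸ isUnit_one
  obtain ⟨g, r, hpr, -, hr⟩ := (pfaffianOrder f).div_set hunit p
  refine ⟨r, (mem_restrictSupport_iff R₀).mpr fun m hm => ?_, ?_⟩
  · refine isStandard_of_forall_not_le fun a b hfst hsnd => ?_
    rw [← degree_pf4 R₀ hfst b.2 hsnd]
    exact hr m hm _ ⟨_, _, _, _, hfst, b.2, hsnd, rfl⟩
  · rw [eq_comm, Ideal.Quotient.mk_eq_mk_iff_sub_mem, hpr, add_sub_cancel_right]
    exact (Finsupp.mem_span_iff_linearCombination _ _ _).mpr ⟨g, rfl⟩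

variable (f) in
theorem plucker_injective : Function.Injective (plucker R₀ f) := by
  refine (injective_iff_map_eq_zero _).mpr fun v hv => ?_
  obtain ⟨q, hq, rfl⟩ := exists_standard_mk_eq R₀ v
  rw [eq_zero_of_plucker_mk_eq_zero R₀ hq hv, map_zero]

end StandardMonomials

section Divisibility

open MvPolynomial

variable (R₀ : Type u) [CommRing R₀] {f : ℕ}

theorem xA_pfaffian (i j k l : Fin f) :
    xA R₀ f i j * xA R₀ f k l - xA R₀ f i k * xA R₀ f j l + xA R₀ f i l * xA R₀ f j k = 0 := by
  apply plucker_injective R₀ f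
  simp only [plucker, map_add, map_sub, map_mul, lift_xA, map_zero]
  ring

theorem xA_mem_nonZeroDivisors {i j : Fin f} (hij : i ≠ j) :
    xA R₀ f i j ∈ nonZeroDivisors (Aring R₀ f) := by
  wlog h : i < j generalizing i j
  · rw [xA_swap, neg_eq_neg_one_mul (xA R₀ f j i)]
    exact mul_mem isUnit_one.neg.mem_nonZeroDivisors
      (this hij.symm (hij.lt_or_gt.resolve_left h))
  refine mem_nonZeroDivisors_of_injective (plucker_injective R₀ f) ?_
  rw [xA_of_lt h]
  exact MonomialOrder.mem_nonZeroDivisors_of_leadingCoeff_mem_nonZeroDivisors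
    ((monic_plucker_X R₀ _).leadingCoeff_eq_one ▸ one_mem _)

theorem IsStandard.add_single {m : P2 f →₀ ℕ} (hm : IsStandard m) {p : P2 f}
    (hp : ∀ e, p ≤ e ∨ e ≤ p) : IsStandard (m + Finsupp.single p 1) := by
  classical
  refine (IsChain.insert hm fun e _ _ => hp e).mono fun e he => ?_
  have hsupp := Finsupp.support_add he
  rw [Finset.mem_union] at hsupp
  exact hsupp.elim Or.inr fun h =>
    Or.inl (Finset.mem_singleton.mp (Finsupp.support_single_subset h))

theorem mul_X_mem_restrictSupport_isStandard {q : MvPolynomial (P2 f) R₀}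
    (hq : q ∈ restrictSupport R₀ {m : P2 f →₀ ℕ | IsStandard m}) {p : P2 f}
    (hp : ∀ e, p ≤ e ∨ e ≤ p) :
    q * X p ∈ restrictSupport R₀ {m : P2 f →₀ ℕ | IsStandard m} := by
  rw [mem_restrictSupport_iff, support_mul_X, Finset.coe_map]
  rintro _ ⟨m, hm, rfl⟩
  exact IsStandard.add_single (hq hm) hp

theorem xA_dvd_of_mul_eq_mul {p q : P2 f} (hpq : p ≠ q) (hp : ∀ e, p ≤ e ∨ e ≤ p)
    (hq : ∀ e, q ≤ e ∨ e ≤ q) {v w : Aring R₀ f}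
    (h : v * xA R₀ f q.1.1 q.1.2 = w * xA R₀ f p.1.1 p.1.2) : xA R₀ f p.1.1 p.1.2 ∣ v := by
  obtain ⟨v, hv, rfl⟩ := exists_standard_mk_eq R₀ v
  obtain ⟨w, hw, rfl⟩ := exists_standard_mk_eq R₀ w
  rw [xA_of_lt p.2, xA_of_lt q.2] at *
  have heq : v * X q = w * X p := by
    refine sub_eq_zero.mp (eq_zero_of_plucker_mk_eq_zero R₀ (sub_mem
      (mul_X_mem_restrictSupport_isStandard R₀ hv hq)
      (mul_X_mem_restrictSupport_isStandard R₀ hw hp)) ?_)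
    rw [map_sub, map_mul, map_mul, h, sub_self, map_zero]
  exact map_dvd _ (X_dvd_of_X_dvd_mul_X hpq (Dvd.intro_left w heq.symm))

end Divisibility

section KillRow

variable (R₀ : Type u) [CommRing R₀] {f : ℕ}

theorem isPfaffianPoint_killRow (a : Fin f) :
    IsPfaffianPoint fun i j => if i = a ∨ j = a then 0 else xA R₀ f i j where
  diag i := by simp
  neg i j := by
    have := xA_swap R₀ f i j
    grind
  pfaffian {i j k l} _ _ _ := by
    have := xA_pfaffian R₀ i j k l
    grind

/-- The endomorphism of `A` that sets the entries in row and column `a` to zero. -/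
def killRow (a : Fin f) : Aring R₀ f →+* Aring R₀ f :=
  lift (algebraMap R₀ _) (isPfaffianPoint_killRow R₀ a)

theorem killRow_xA_row (a j : Fin f) : killRow R₀ a (xA R₀ f a j) = 0 := by
  simp [killRow]

theorem killRow_xA_of_ne {a i j : Fin f} (hi : i ≠ a) (hj : j ≠ a) :
    killRow R₀ a (xA R₀ f i j) = xA R₀ f i j := by
  simp [killRow, hi, hj]

theorem sub_killRow_mem_span (a : Fin f) (v : Aring R₀ f) :
    v - killRow R₀ a v ∈ Ideal.span (Set.range (xA R₀ f a)) := by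
  have hrow (j : Fin f) : xA R₀ f a j ∈ Ideal.span (Set.range (xA R₀ f a)) :=
    Ideal.subset_span ⟨j, rfl⟩
  let π := Ideal.Quotient.mk (Ideal.span (Set.range (xA R₀ f a)))
  suffices hπ : π = π.comp (killRow R₀ a) from
    (Ideal.Quotient.mk_eq_mk_iff_sub_mem _ _).mp (DFunLike.congr_fun hπ v)
  refine Aring_hom_ext (g := π) (fun r => ?_) fun i j => ?_
  · simp [killRow]
  · rw [RingHom.comp_apply]
    by_cases hi : i = a
    · subst hi
      rw [killRow_xA_row, map_zero, Ideal.Quotient.eq_zero_iff_mem]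
      exact hrow j
    by_cases hj : j = a
    · subst hj
      rw [xA_swap, map_neg, map_neg, map_neg, killRow_xA_row, map_zero,
        neg_zero, neg_eq_zero, Ideal.Quotient.eq_zero_iff_mem]
      exact hrow i
    · rw [killRow_xA_of_ne R₀ hi hj]

theorem mem_span_row_of_mul_xA_mem {a b c : Fin f} (hba : b ≠ a) (hca : c ≠ a) (hbc : b ≠ c)
    {v : Aring R₀ f} (h : v * xA R₀ f b c ∈ Ideal.span (Set.range (xA R₀ f a))) :
    v ∈ Ideal.span (Set.range (xA R₀ f a)) := by
  have hle : Ideal.span (Set.range (xA R₀ f a)) ≤ RingHom.ker (killRow R₀ a) := by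
    rw [Ideal.span_le]
    rintro _ ⟨j, rfl⟩
    exact killRow_xA_row R₀ a j
  have hzero : killRow R₀ a v = 0 := by
    have hmul := RingHom.mem_ker.mp (hle h)
    rw [map_mul, killRow_xA_of_ne R₀ hba hca] at hmul
    exact (mul_right_mem_nonZeroDivisors_eq_zero_iff (xA_mem_nonZeroDivisors R₀ hbc)).mp hmul
  simpa only [hzero, sub_zero] using sub_killRow_mem_span R₀ a v

end KillRow

section BorderedMatrix

variable {R₀ : Type u} [CommRing R₀] {f : ℕ}

variable (R₀ f) in
/-- The homomorphism between the rings of two consecutive sizes that identifies the generic matrix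
with the upper left block of the bigger one. -/
def castSuccHom : Aring R₀ f →+* Aring R₀ (f + 1) :=
  lift (algebraMap R₀ _) (y := fun i j => xA R₀ (f + 1) i.castSucc j.castSucc)
    { diag := fun _ => xA_self _ _ _
      neg := fun _ _ => xA_swap _ _ _ _
      pfaffian := fun _ _ _ => xA_pfaffian _ _ _ _ _ }

theorem sum_castSuccHom_mul_last_eq_zero {a b : Fin f} (hab : a ≠ b) {c : Fin f → Aring R₀ f}
    (ha : xA R₀ f a ⬝ᵥ c = 0) (hb : xA R₀ f b ⬝ᵥ c = 0) :
    ∑ j, castSuccHom R₀ f (c j) * xA R₀ (f + 1) j.castSucc (Fin.last f) = 0 := by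
  have row_eq_zero {r : Fin f} (hr : xA R₀ f r ⬝ᵥ c = 0) :
      ∑ j, castSuccHom R₀ f (c j) * xA R₀ (f + 1) r.castSucc j.castSucc = 0 := by
    rw [← map_zero (castSuccHom R₀ f), ← hr, dotProduct, map_sum]
    refine Finset.sum_congr rfl fun j _ => ?_
    rw [map_mul, castSuccHom, lift_xA, mul_comm]
  have hreg := xA_mem_nonZeroDivisors R₀ (Fin.castSucc_injective f |>.ne hab)
  rw [← mul_left_mem_nonZeroDivisors_eq_zero_iff hreg]
  calc xA R₀ (f + 1) a.castSucc b.castSucc *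
        ∑ j, castSuccHom R₀ f (c j) * xA R₀ (f + 1) j.castSucc (Fin.last f)
      = xA R₀ (f + 1) b.castSucc (Fin.last f) *
          (∑ j, castSuccHom R₀ f (c j) * xA R₀ (f + 1) a.castSucc j.castSucc) -
        xA R₀ (f + 1) a.castSucc (Fin.last f) *
          ∑ j, castSuccHom R₀ f (c j) * xA R₀ (f + 1) b.castSucc j.castSucc := by
        simp only [Finset.mul_sum, ← Finset.sum_sub_distrib]
        refine Finset.sum_congr rfl fun j _ => ?_
        linear_combination castSuccHom R₀ f (c j) *
          xA_pfaffian R₀ a.castSucc b.castSucc j.castSucc (Fin.last f)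
    _ = 0 := by rw [row_eq_zero ha, row_eq_zero hb, mul_zero, mul_zero, sub_zero]

section

variable {N : Type*} [AddCommGroup N] {e : Fin f → N}

/-- The generic matrix bordered by a column and a row with entries in the square-zero ideal `N`
of `A ⊕ N`. -/
def borderedMatrix (e : Fin f → N) :
    Fin (f + 1) → Fin (f + 1) → TrivSqZeroExt (Aring R₀ f) N :=
  Fin.snoc (α := fun _ => Fin (f + 1) → TrivSqZeroExt (Aring R₀ f) N)
    (fun i => Fin.snoc (α := fun _ => TrivSqZeroExt (Aring R₀ f) N)
      (fun j => .inl (xA R₀ f i j)) (.inr (e i)))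
    (Fin.snoc (α := fun _ => TrivSqZeroExt (Aring R₀ f) N) (fun j => -.inr (e j)) 0)

theorem borderedMatrix_castSucc_castSucc (i j : Fin f) :
    borderedMatrix (R₀ := R₀) e i.castSucc j.castSucc = .inl (xA R₀ f i j) := by
  simp [borderedMatrix]

theorem borderedMatrix_castSucc_last (i : Fin f) :
    borderedMatrix (R₀ := R₀) e i.castSucc (Fin.last f) = .inr (e i) := by
  simp [borderedMatrix]

variable [Module (Aring R₀ f) N] [Module (Aring R₀ f)ᵐᵒᵖ N] [IsCentralScalar (Aring R₀ f) N]

theorem isPfaffianPoint_borderedMatrix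
    (he : ∀ {i j k : Fin f}, i < j → j < k →
      xA R₀ f j k • e i - xA R₀ f i k • e j + xA R₀ f i j • e k = 0) :
    IsPfaffianPoint (borderedMatrix (R₀ := R₀) e) where
  diag i := by
    induction i using Fin.lastCases <;> simp [borderedMatrix]
  neg i j := by
    induction i using Fin.lastCases <;> induction j using Fin.lastCases <;>
      simp [borderedMatrix, ← xA_swap, ← TrivSqZeroExt.inl_neg]
  pfaffian {i j k l} hij hjk hkl := by
    obtain ⟨k, rfl⟩ := Fin.exists_castSucc_eq.mpr (hkl.trans_le (Fin.le_last l)).ne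
    obtain ⟨j, rfl⟩ := Fin.exists_castSucc_eq.mpr (hjk.trans_le (Fin.le_last _)).ne
    obtain ⟨i, rfl⟩ := Fin.exists_castSucc_eq.mpr (hij.trans_le (Fin.le_last _)).ne
    simp only [borderedMatrix_castSucc_castSucc]
    induction l using Fin.lastCases with
    | last =>
      simp only [borderedMatrix_castSucc_last, mul_comm (TrivSqZeroExt.inr (e i)),
        TrivSqZeroExt.inl_mul_inr, ← TrivSqZeroExt.inr_sub, ← TrivSqZeroExt.inr_add]
      rw [← TrivSqZeroExt.inr_zero, ← he hij hjk]
      congr 1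
      abel
    | cast l =>
      simp only [borderedMatrix_castSucc_castSucc, ← TrivSqZeroExt.inl_mul,
        ← TrivSqZeroExt.inl_sub, ← TrivSqZeroExt.inl_add, xA_pfaffian, TrivSqZeroExt.inl_zero]

theorem sum_smul_eq_zero_of_dotProduct_eq_zero
    (he : ∀ {i j k : Fin f}, i < j → j < k →
      xA R₀ f j k • e i - xA R₀ f i k • e j + xA R₀ f i j • e k = 0)
    {a b : Fin f} (hab : a ≠ b) {c : Fin f → Aring R₀ f}
    (ha : xA R₀ f a ⬝ᵥ c = 0) (hb : xA R₀ f b ⬝ᵥ c = 0) : ∑ j, c j • e j = 0 := by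
  let inlHom := TrivSqZeroExt.inlHom (Aring R₀ f) N
  let ψ : Aring R₀ (f + 1) →+* TrivSqZeroExt (Aring R₀ f) N :=
    lift (inlHom.comp (algebraMap R₀ _)) (isPfaffianPoint_borderedMatrix he)
  have hψ : ψ.comp (castSuccHom R₀ f) = inlHom := by
    refine Aring_hom_ext (fun r => ?_) fun i j => ?_
    · simp [ψ, castSuccHom]
    · simp [ψ, castSuccHom, borderedMatrix_castSucc_castSucc, inlHom]
  apply TrivSqZeroExt.inr_injective (R := Aring R₀ f)
  rw [TrivSqZeroExt.inr_sum, TrivSqZeroExt.inr_zero, ← map_zero ψ,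
    ← sum_castSuccHom_mul_last_eq_zero hab ha hb, map_sum]
  refine Finset.sum_congr rfl fun j _ => ?_
  rw [map_mul, ← RingHom.comp_apply, hψ, lift_xA, borderedMatrix_castSucc_last]
  exact (TrivSqZeroExt.inl_mul_inr _ _).symm

end

theorem M1_col (v : T3 f) :
    (M1 R₀ f).col v = Pi.single v.1.1 (xA R₀ f v.1.2.1 v.1.2.2) -
      Pi.single v.1.2.1 (xA R₀ f v.1.1 v.1.2.2) + Pi.single v.1.2.2 (xA R₀ f v.1.1 v.1.2.1) := by
  have hij := v.2.1.ne
  have hjk := v.2.2.ne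
  have hik := (v.2.1.trans v.2.2).ne
  ext r
  simp only [Matrix.col_apply, M1, Pi.add_apply, Pi.sub_apply, Pi.single_apply]
  grind

theorem xA_vecMul_M1 (a : Fin f) : Matrix.vecMul (xA R₀ f a) (M1 R₀ f) = 0 := by
  ext v
  change xA R₀ f a ⬝ᵥ (M1 R₀ f).col v = 0
  rw [M1_col, dotProduct_add, dotProduct_sub, dotProduct_single, dotProduct_single,
    dotProduct_single]
  linear_combination xA_pfaffian R₀ a v.1.1 v.1.2.1 v.1.2.2

theorem map_eq_zero_of_dotProduct_eq_zero {N : Type*} [AddCommGroup N] [Module (Aring R₀ f) N]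
    [Module (Aring R₀ f)ᵐᵒᵖ N] [IsCentralScalar (Aring R₀ f) N]
    {g : (Fin f → Aring R₀ f) →ₗ[Aring R₀ f] N} (hg : ∀ v, g ((M1 R₀ f).col v) = 0)
    {a b : Fin f} (hab : a ≠ b) {c : Fin f → Aring R₀ f}
    (ha : xA R₀ f a ⬝ᵥ c = 0) (hb : xA R₀ f b ⬝ᵥ c = 0) : g c = 0 := by
  have he {i j k : Fin f} (hij : i < j) (hjk : j < k) :
      xA R₀ f j k • g (Pi.single i 1) - xA R₀ f i k • g (Pi.single j 1) +
        xA R₀ f i j • g (Pi.single k 1) = 0 := by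
    have hcol := hg ⟨(i, j, k), hij, hjk⟩
    rw [M1_col, map_add, map_sub] at hcol
    simpa only [← map_single_eq_smul] using hcol
  rw [← sum_smul_eq_zero_of_dotProduct_eq_zero he hab ha hb]
  conv_lhs => rw [← Finset.univ_sum_single c, map_sum]
  exact Finset.sum_congr rfl fun j _ => map_single_eq_smul g j (c j)

theorem mem_range_M1_of_dotProduct_eq_zero {a b : Fin f} (hab : a ≠ b) {c : Fin f → Aring R₀ f}
    (ha : xA R₀ f a ⬝ᵥ c = 0) (hb : xA R₀ f b ⬝ᵥ c = 0) :
    c ∈ LinearMap.range (M1 R₀ f).mulVecLin := by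
  rw [← Submodule.Quotient.mk_eq_zero]
  refine map_eq_zero_of_dotProduct_eq_zero (g := Submodule.mkQ _) (fun v => ?_) hab ha hb
  exact (Submodule.Quotient.mk_eq_zero _).mpr ⟨Pi.single v 1, Matrix.mulVec_single_one _ _⟩

end BorderedMatrix

section Exactness

variable {R₀ : Type u} [CommRing R₀] {f : ℕ}

theorem xA_mul_dotProduct_alternating (a b c : Fin f) (y : Fin f → Aring R₀ f) :
    xA R₀ f b c * (xA R₀ f a ⬝ᵥ y) - xA R₀ f a c * (xA R₀ f b ⬝ᵥ y) +
      xA R₀ f a b * (xA R₀ f c ⬝ᵥ y) = 0 := by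
  simp only [dotProduct, Finset.mul_sum, ← Finset.sum_sub_distrib, ← Finset.sum_add_distrib]
  refine Finset.sum_eq_zero fun j _ => ?_
  linear_combination y j * xA_pfaffian R₀ a b c j

theorem exists_xA_row_dotProduct_eq {a b c : Fin f} (hba : b ≠ a) (hca : c ≠ a) (hbc : b ≠ c)
    {u v w : Aring R₀ f}
    (h : xA R₀ f b c * u - xA R₀ f a c * v + xA R₀ f a b * w = 0) :
    ∃ y, xA R₀ f a ⬝ᵥ y = u := by
  have hu : u ∈ Ideal.span (Set.range (xA R₀ f a)) := by
    refine mem_span_row_of_mul_xA_mem R₀ hba hca hbc ?_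
    have hrow (j : Fin f) (z : Aring R₀ f) :
        z * xA R₀ f a j ∈ Ideal.span (Set.range (xA R₀ f a)) :=
      Ideal.mul_mem_left _ z (Ideal.subset_span ⟨j, rfl⟩)
    convert sub_mem (hrow c v) (hrow b w) using 1
    linear_combination h
  obtain ⟨y, hy⟩ := Ideal.mem_span_range_iff_exists_fun.mp hu
  exact ⟨y, by rw [dotProduct_comm]; exact hy⟩

theorem exists_three_rows_dotProduct_eq {a b c : Fin f} (hab : a < b) (hac : a < c) (hbc : b ≠ c)
    (hcmp_ab : ∀ e : P2 f, ⟨(a, b), hab⟩ ≤ e ∨ e ≤ ⟨(a, b), hab⟩)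
    (hcmp_ac : ∀ e : P2 f, ⟨(a, c), hac⟩ ≤ e ∨ e ≤ ⟨(a, c), hac⟩) {u v w : Aring R₀ f}
    (h : xA R₀ f b c * u - xA R₀ f a c * v + xA R₀ f a b * w = 0) :
    ∃ y, xA R₀ f a ⬝ᵥ y = u ∧ xA R₀ f b ⬝ᵥ y = v ∧ xA R₀ f c ⬝ᵥ y = w := by
  obtain ⟨y, rfl⟩ := exists_xA_row_dotProduct_eq hab.ne' hac.ne' hbc h
  have hy := xA_mul_dotProduct_alternating a b c y
  have hvw : (v - xA R₀ f b ⬝ᵥ y) * xA R₀ f a c = (w - xA R₀ f c ⬝ᵥ y) * xA R₀ f a b := by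
    linear_combination hy - h
  obtain ⟨z, hz⟩ := xA_dvd_of_mul_eq_mul R₀ (by simpa [Subtype.ext_iff] using hbc)
    hcmp_ab hcmp_ac hvw
  have hw : w - xA R₀ f c ⬝ᵥ y = xA R₀ f a c * z := by
    rw [← mul_cancel_right_mem_nonZeroDivisors (xA_mem_nonZeroDivisors R₀ hab.ne), ← hvw, hz]
    ring
  refine ⟨y - Pi.single a z, ?_, ?_, ?_⟩ <;>
    rw [dotProduct_sub, dotProduct_single]
  · rw [xA_self, zero_mul, sub_zero]
  · linear_combination -hz - z * xA_swap R₀ f a b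
  · linear_combination -hw - z * xA_swap R₀ f a c

variable (R₀) in
/-- The map `F* → A³` given by the first three rows of `-X`. -/
def negRows (hf : 3 ≤ f) : (Fin f → Aring R₀ f) →ₗ[Aring R₀ f] (Fin 3 → Aring R₀ f) :=
  (Matrix.of fun (r : Fin 3) (j : Fin f) => -xA R₀ f (Fin.castLE hf r) j).mulVecLin

variable (R₀) in
/-- The linear form `A³ → A` with matrix `[x_{2,3}, -x_{1,3}, x_{1,2}]`. -/
def pairForm (hf : 3 ≤ f) : (Fin 3 → Aring R₀ f) →ₗ[Aring R₀ f] Aring R₀ f :=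
  (LinearMap.proj (0 : Fin 1)).comp
    (Matrix.of fun (_ : Fin 1) (r : Fin 3) =>
      if r = 0 then xA R₀ f (Fin.castLE hf 1) (Fin.castLE hf 2)
      else if r = 1 then -xA R₀ f (Fin.castLE hf 0) (Fin.castLE hf 2)
      else xA R₀ f (Fin.castLE hf 0) (Fin.castLE hf 1)).mulVecLin

theorem negRows_apply (hf : 3 ≤ f) (y : Fin f → Aring R₀ f) (r : Fin 3) :
    negRows R₀ hf y r = -(xA R₀ f (Fin.castLE hf r) ⬝ᵥ y) :=
  neg_dotProduct (xA R₀ f (Fin.castLE hf r)) y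

theorem pairForm_apply (hf : 3 ≤ f) (w : Fin 3 → Aring R₀ f) :
    pairForm R₀ hf w =
      xA R₀ f (Fin.castLE hf 1) (Fin.castLE hf 2) * w 0 -
        xA R₀ f (Fin.castLE hf 0) (Fin.castLE hf 2) * w 1 +
        xA R₀ f (Fin.castLE hf 0) (Fin.castLE hf 1) * w 2 := by
  simp only [pairForm, LinearMap.comp_apply, LinearMap.proj_apply, Matrix.mulVecLin_apply,
    Matrix.mulVec, dotProduct, Matrix.of_apply, Fin.sum_univ_three, Fin.reduceEq, if_true, if_false]
  ring

theorem exact_M1_negRows (hf : 3 ≤ f) :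
    Function.Exact (M1 R₀ f).mulVecLin (negRows R₀ hf) := by
  refine fun c => ⟨fun hc => ?_, ?_⟩
  · have hrow (r : Fin 3) : xA R₀ f (Fin.castLE hf r) ⬝ᵥ c = 0 := by
      rw [← neg_eq_zero, ← negRows_apply, hc, Pi.zero_apply]
    have h01 : Fin.castLE hf 0 ≠ Fin.castLE hf 1 := (Fin.castLE_injective hf).ne (by decide)
    exact mem_range_M1_of_dotProduct_eq_zero h01 (hrow 0) (hrow 1)
  · rintro ⟨z, rfl⟩
    ext r
    rw [negRows_apply, Matrix.mulVecLin_apply, Matrix.dotProduct_mulVec, xA_vecMul_M1,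
      zero_dotProduct, neg_zero, Pi.zero_apply]

theorem le_or_le_of_snd_le_two {p : P2 f} (hfst : (p.1.1 : ℕ) = 0) (hsnd : (p.1.2 : ℕ) ≤ 2)
    (e : P2 f) : p ≤ e ∨ e ≤ p := by
  obtain ⟨⟨i, j⟩, hij⟩ := e
  simp only [← Subtype.coe_le_coe, Prod.le_def, Fin.le_def, Fin.lt_def] at hij ⊢
  lia

theorem exact_negRows_pairForm (hf : 3 ≤ f) :
    Function.Exact (negRows R₀ hf) (pairForm R₀ hf) := by
  have h01 : Fin.castLE hf 0 < Fin.castLE hf 1 := by simp [Fin.lt_def]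
  have h02 : Fin.castLE hf 0 < Fin.castLE hf 2 := by simp [Fin.lt_def]
  have h12 : Fin.castLE hf 1 ≠ Fin.castLE hf 2 := (Fin.castLE_injective hf).ne (by decide)
  refine fun w => ⟨fun hw => ?_, ?_⟩
  · rw [pairForm_apply] at hw
    obtain ⟨y, h₀, h₁, h₂⟩ := exists_three_rows_dotProduct_eq h01 h02 h12
      (le_or_le_of_snd_le_two rfl one_le_two) (le_or_le_of_snd_le_two rfl le_rfl) hw
    refine ⟨-y, ?_⟩
    ext r
    rw [negRows_apply, dotProduct_neg, neg_neg]
    fin_cases r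
    exacts [h₀, h₁, h₂]
  · rintro ⟨y, rfl⟩
    simp only [pairForm_apply, negRows_apply]
    linear_combination -xA_mul_dotProduct_alternating (Fin.castLE hf 0) (Fin.castLE hf 1)
      (Fin.castLE hf 2) y

theorem exact_pairForm_mk (hf : 3 ≤ f) :
    Function.Exact (pairForm R₀ hf) (Ideal.Quotient.mk (Ideal.span
      {xA R₀ f (Fin.castLE hf 0) (Fin.castLE hf 1), xA R₀ f (Fin.castLE hf 1) (Fin.castLE hf 2),
        xA R₀ f (Fin.castLE hf 0) (Fin.castLE hf 2)})) := by
  intro v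
  rw [Ideal.Quotient.eq_zero_iff_mem, Ideal.span, Submodule.mem_span_triple]
  constructor
  · rintro ⟨r, s, t, rfl⟩
    refine ⟨![s, -t, r], ?_⟩
    simp only [pairForm_apply, smul_eq_mul, Matrix.cons_val]
    ring
  · rintro ⟨w, rfl⟩
    refine ⟨w 2, w 0, -w 1, ?_⟩
    simp only [pairForm_apply, smul_eq_mul]
    ring

end Exactness

theorem stmt_6_general (R₀ : Type u) [CommRing R₀] (f : ℕ) (hf : 3 ≤ f) :
    letI x := fun i j : Fin 3 => xA R₀ f (Fin.castLE hf i) (Fin.castLE hf j)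
    letI π := Ideal.Quotient.mk (Ideal.span {x 0 1, x 1 2, x 0 2})
    Function.Exact (M1 R₀ f).mulVecLin (negRows R₀ hf) ∧
      Function.Exact (negRows R₀ hf) (pairForm R₀ hf) ∧
      Function.Exact (pairForm R₀ hf) π ∧ Function.Surjective π :=
  ⟨exact_M1_negRows hf, exact_negRows_pairForm hf, exact_pairForm_mk hf,
    Ideal.Quotient.mk_surjective⟩

/-- for a Noetherian domain `R₀` and `f ≥ 3`, the sequence
`⋀³F* → F* → A³ → A → A' → 0` is exact, where the first map is `d₁`, the
second is given by the first three rows of `-X`, the third by the row vector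
`[x_{2,3}, -x_{1,3}, x_{1,2}]`, and `A' = A/(x_{1,2}, x_{2,3}, x_{1,3})`.
(Exactness of `⋀³F* → F* → A³` says precisely that the induced map from
`N = coker d₁` to `A³` is injective, i.e. `0 → N → A³ → A → A' → 0` is exact.) -/
theorem stmt_6 (R₀ : Type u) [CommRing R₀] [IsDomain R₀] [IsNoetherianRing R₀]
    (f : ℕ) (hf : 3 ≤ f) :
    letI A := Aring R₀ f
    letI x : Fin f → Fin f → A := xA R₀ f
    letI i0 : Fin f := ⟨0, by omega⟩
    letI i1 : Fin f := ⟨1, by omega⟩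
    letI i2 : Fin f := ⟨2, by omega⟩
    letI d1 : (T3 f → A) →ₗ[A] (Fin f → A) := (M1 R₀ f).mulVecLin
    letI d0' : (Fin f → A) →ₗ[A] (Fin 3 → A) :=
      (Matrix.of fun (r : Fin 3) (j : Fin f) =>
        - x (Fin.castLE hf r) j).mulVecLin
    letI ρ : (Fin 3 → A) →ₗ[A] A :=
      (LinearMap.proj (0 : Fin 1)).comp
        (Matrix.of fun (_ : Fin 1) (r : Fin 3) =>
          if r = 0 then x i1 i2 else if r = 1 then - x i0 i2 else x i0 i1).mulVecLin
    letI A' := A ⧸ Ideal.span ({x i0 i1, x i1 i2, x i0 i2} : Set A)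
    letI π : A →+* A' := Ideal.Quotient.mk _
    Function.Exact d1 d0' ∧ Function.Exact d0' ρ ∧ Function.Exact ρ π ∧
      Function.Surjective π :=
  stmt_6_general R₀ f hf

end AluffiStmt
end
end

section
/- Let $R_0$ be an arbitrary commutative Noetherian ring, $\mathfrak{f} \geq 3$, $\mathcal{R} = R_0[x_{i,j} : 1 \le i < j \le \mathfrak{f}; \ t_1, \dots, t_{\mathfrak f}]$, $\mathbf{X}$ the generic alternating matrix, $\mathbf{t} = [t_1, \dots, t_{\mathfrak f}]$, and $J = \operatorname{Pf}_4(\mathbf{X}) + I_1(\mathbf{t}\mathbf{X})$. Then $\operatorname{ht} J \geq \binom{\mathfrak{f}-2}{2} + 2$. -/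
open CategoryTheory

noncomputable section
namespace AluffiStmt

universe u

/-- Variables for the ring `𝓡 = R₀[x_{i,j}; t_i]`. -/
abbrev Var (f : ℕ) := P2 f ⊕ Fin f

/-- The `(i,j)` entry of the generic alternating matrix `X` in `𝓡`. -/
def xvt (R₀ : Type u) [CommRing R₀] (f : ℕ) (i j : Fin f) : MvPolynomial (Var f) R₀ :=
  if h : i < j then MvPolynomial.X (Sum.inl ⟨(i, j), h⟩)
  else if h : j < i then - MvPolynomial.X (Sum.inl ⟨(j, i), h⟩) else 0

/-- The entry `t_i` of the generic row vector `t` in `𝓡`. -/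
def tvt (R₀ : Type u) [CommRing R₀] (f : ℕ) (i : Fin f) : MvPolynomial (Var f) R₀ :=
  MvPolynomial.X (Sum.inr i)

/-- The Pfaffian of the `4 × 4` principal submatrix of `X` with rows/columns
`i < j < k < l`. -/
def pf4t (R₀ : Type u) [CommRing R₀] (f : ℕ) (i j k l : Fin f) : MvPolynomial (Var f) R₀ :=
  xvt R₀ f i j * xvt R₀ f k l - xvt R₀ f i k * xvt R₀ f j l + xvt R₀ f i l * xvt R₀ f j k

/-- The ideal `Pf₄(X)` of `𝓡`. -/
def Pf4t (R₀ : Type u) [CommRing R₀] (f : ℕ) : Ideal (MvPolynomial (Var f) R₀) :=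
  Ideal.span {p | ∃ i j k l : Fin f, i < j ∧ j < k ∧ k < l ∧ p = pf4t R₀ f i j k l}

/-- The `j`-th entry of the row vector `t·X`. -/
def tX (R₀ : Type u) [CommRing R₀] (f : ℕ) (j : Fin f) : MvPolynomial (Var f) R₀ :=
  ∑ i : Fin f, tvt R₀ f i * xvt R₀ f i j

/-- The ideal `I₁(t·X)` generated by the entries of `t·X`. -/
def ItX (R₀ : Type u) [CommRing R₀] (f : ℕ) : Ideal (MvPolynomial (Var f) R₀) :=
  Ideal.span {p | ∃ j : Fin f, p = tX R₀ f j}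

/-- The ideal `J = Pf₄(X) + I₁(t·X)`. -/
def Jt (R₀ : Type u) [CommRing R₀] (f : ℕ) : Ideal (MvPolynomial (Var f) R₀) :=
  Pf4t R₀ f + ItX R₀ f

/-- The height of an ideal: the infimum of the heights of the primes
containing it. -/
def idealHeight (R : Type u) [CommRing R] (J : Ideal R) : ℕ∞ :=
  sInf {h | ∃ p : PrimeSpectrum R, J ≤ p.asIdeal ∧ h = Order.height p}

/-!
Let `P ⊇ J` be a prime. If no variable `x a b` survives modulo `P`, then `P` contains
`(f choose 2)` variables. Otherwise `x a b` is invertible at `P`; the Pfaffians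
`x a b * x k l - x a k * x b l + x a l * x b k` then solve for every `x k l` with
`k, l ∉ {a, b}`, and the columns `a` and `b` of `tX` solve for `t b` and `t a`. Either way `P`
solves, up to a denominator outside `P`, for a set `E` of variables in terms of the remaining ones.
Freeing the variables of `E` one after the other gives a chain of `#E` strict inclusions of primes
descending from `P`.
-/

section Elimination

open MvPolynomial

variable {σ R : Type*} [CommRing R] (P : Ideal (MvPolynomial σ R)) {d h : MvPolynomial σ R}
  {e : σ}

open Classical in
/-- The homomorphism `R[σ] → (R[σ]/P)[T]` sending the variable `X e` to `T` and every other
variable to its class modulo `P`. -/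
def freeingHom (e : σ) : MvPolynomial σ R →ₐ[R] Polynomial (MvPolynomial σ R ⧸ P) :=
  aeval (Function.update (fun v => Polynomial.C (Ideal.Quotient.mk P (X v))) e Polynomial.X)

/-- The ideal of `R[σ]` obtained from `P` by freeing the variable `X e`, that is, the extension of
`P ∩ R[σ \ {e}]`. It is encoded as a kernel because its primality is then immediate. -/
def freeVariable (e : σ) : Ideal (MvPolynomial σ R) :=
  RingHom.ker (freeingHom P e)

instance [P.IsPrime] : (freeVariable P e).IsPrime :=
  RingHom.ker_isPrime _

lemma freeingHom_X_self : freeingHom P e (X e) = Polynomial.X := by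
  simp [freeingHom]

lemma freeingHom_of_mem_supported (hd : d ∈ supported R {e}ᶜ) :
    freeingHom P e d = Polynomial.C (Ideal.Quotient.mk P d) := by
  refine AlgHom.adjoin_le_equalizer (freeingHom P e)
    (Polynomial.CAlgHom.comp (Ideal.Quotient.mkₐ R P)) ?_ hd
  rintro _ ⟨v, hv, rfl⟩
  have hve : v ≠ e := hv
  simp [freeingHom, hve]

lemma mem_freeVariable_iff_of_mem_supported (hd : d ∈ supported R {e}ᶜ) :
    d ∈ freeVariable P e ↔ d ∈ P := by
  rw [freeVariable, RingHom.mem_ker, freeingHom_of_mem_supported P hd, Polynomial.C_eq_zero,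
    Ideal.Quotient.eq_zero_iff_mem]

lemma freeVariable_le : freeVariable P e ≤ P := by
  have eval_comp : ((Polynomial.aeval (Ideal.Quotient.mk P (X e))).restrictScalars R).comp
      (freeingHom P e) = Ideal.Quotient.mkₐ R P := by
    ext v
    by_cases hv : v = e
    · subst hv
      simp [freeingHom]
    · simp [freeingHom, hv]
  intro p hp
  have hp' : freeingHom P e p = 0 := hp
  rw [← Ideal.Quotient.eq_zero_iff_mem, ← Ideal.Quotient.mkₐ_eq_mk R, ← eval_comp,
    AlgHom.comp_apply, hp', map_zero]

lemma freeVariable_lt (hdP : d ∉ P) (hd : d ∈ supported R {e}ᶜ) (hh : h ∈ supported R {e}ᶜ)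
    (hrel : d * X e - h ∈ P) : freeVariable P e < P := by
  refine lt_of_le_of_ne (freeVariable_le P) fun heq => hdP ?_
  rw [← heq, freeVariable, RingHom.mem_ker, map_sub, map_mul, freeingHom_X_self,
    freeingHom_of_mem_supported P hd, freeingHom_of_mem_supported P hh] at hrel
  have hcoeff := congrArg (Polynomial.coeff · 1) hrel
  simpa [Polynomial.coeff_C, Ideal.Quotient.eq_zero_iff_mem] using hcoeff

theorem card_le_height_of_forall_mul_X_sub_mem [P.IsPrime] (E : Finset σ) (hdP : d ∉ P)
    (hd : d ∈ supported R (E : Set σ)ᶜ)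
    (hrel : ∀ e ∈ E, ∃ h ∈ supported R (E : Set σ)ᶜ, d * X e - h ∈ P) :
    (E.card : ℕ∞) ≤ P.height := by
  classical
  induction E using Finset.induction_on generalizing P with
  | empty => simp
  | insert e E he ih =>
    have supported_le {s : Set σ} (hs : s ⊆ (insert e E : Finset σ)) :
        supported R ((insert e E : Finset σ) : Set σ)ᶜ ≤ supported R sᶜ :=
      supported_mono (Set.compl_subset_compl.2 hs)
    have le_e := supported_le (s := {e}) (by simp)
    have le_E := supported_le (s := E) (by simp)
    have card_le : (E.card : ℕ∞) ≤ (freeVariable P e).height := by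
      refine ih (freeVariable P e) ?_ (le_E hd) fun e' he' => ?_
      · rwa [mem_freeVariable_iff_of_mem_supported P (le_e hd)]
      · obtain ⟨h, hh, hhP⟩ := hrel e' (Finset.mem_insert_of_mem he')
        have hX : X e' ∈ supported R ({e}ᶜ : Set σ) :=
          Algebra.subset_adjoin ⟨e', ne_of_mem_of_not_mem he' he, rfl⟩
        exact ⟨h, le_E hh, (mem_freeVariable_iff_of_mem_supported P
          (sub_mem (mul_mem (le_e hd) hX) (le_e hh))).2 hhP⟩
    obtain ⟨h, hh, hhP⟩ := hrel e (Finset.mem_insert_self e E)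
    calc ((insert e E).card : ℕ∞) = E.card + 1 := by
          rw [Finset.card_insert_of_notMem he, Nat.cast_add, Nat.cast_one]
      _ ≤ (freeVariable P e).height + 1 := by gcongr
      _ ≤ P.height := Ideal.height_add_one_le_of_lt_of_isPrime
          (freeVariable_lt P hdP (le_e hd) (le_e hh) hhP)

end Elimination

lemma le_idealHeight {R : Type u} [CommRing R] {J : Ideal R} {n : ℕ∞}
    (hn : ∀ P : Ideal R, P.IsPrime → J ≤ P → n ≤ P.height) : n ≤ idealHeight R J := by
  refine le_sInf ?_
  rintro _ ⟨P, hJP, rfl⟩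
  exact (hn P.asIdeal P.isPrime hJP).trans_eq P.height_eq_orderHeight

section GenericMatrix

variable {R₀ : Type u} [CommRing R₀] {f : ℕ}

lemma xvt_of_lt {i j : Fin f} (hij : i < j) :
    xvt R₀ f i j = MvPolynomial.X (Sum.inl ⟨(i, j), hij⟩) :=
  dif_pos hij

lemma xvt_self (i : Fin f) : xvt R₀ f i i = 0 := by
  simp [xvt]

lemma xvt_swap (i j : Fin f) : xvt R₀ f j i = -xvt R₀ f i j := by
  rcases lt_trichotomy i j with hij | rfl | hij
  · simp [xvt, hij, hij.not_gt]
  · simp [xvt_self]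
  · simp [xvt, hij, hij.not_gt]

lemma pf4t_mem_Pf4t {a b k l : Fin f} (hab : a < b) (hkl : k < l) (hak : a ≠ k) (hal : a ≠ l)
    (hbk : b ≠ k) (hbl : b ≠ l) : pf4t R₀ f a b k l ∈ Pf4t R₀ f := by
  have mem_of_lt {i j m n : Fin f} (hij : i < j) (hjm : j < m) (hmn : m < n) :
      pf4t R₀ f i j m n ∈ Pf4t R₀ f :=
    Ideal.subset_span ⟨i, j, m, n, hij, hjm, hmn, rfl⟩
  wlog hlt : a < k generalizing a b k l
  · have hswap : pf4t R₀ f a b k l = pf4t R₀ f k l a b := by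
      rw [pf4t, pf4t, xvt_swap a k, xvt_swap b l, xvt_swap a l, xvt_swap b k]
      ring
    rw [hswap]
    exact this hkl hab hak.symm hbk.symm hal.symm hbl.symm (hak.lt_or_gt.resolve_left hlt)
  rcases hbk.lt_or_gt with hbk | hkb
  · exact mem_of_lt hab hbk hkl
  rcases hbl.lt_or_gt with hbl | hlb
  · have hswap : pf4t R₀ f a b k l = -pf4t R₀ f a k b l := by
      rw [pf4t, pf4t, xvt_swap k b]
      ring
    rw [hswap]
    exact neg_mem (mem_of_lt hlt hkb hbl)
  · have hcycle : pf4t R₀ f a b k l = pf4t R₀ f a k l b := by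
      rw [pf4t, pf4t, xvt_swap k b, xvt_swap l b]
      ring
    rw [hcycle]
    exact mem_of_lt hlt hkl hlb

lemma tX_mem_ItX (j : Fin f) : tX R₀ f j ∈ ItX R₀ f :=
  Ideal.subset_span ⟨j, rfl⟩

lemma xvt_mul_tvt {a b : Fin f} (hab : a ≠ b) :
    xvt R₀ f a b * tvt R₀ f a = tX R₀ f b - ∑ i ∈ {a, b}ᶜ, tvt R₀ f i * xvt R₀ f i b := by
  rw [tX, ← Finset.sum_add_sum_compl {a, b}, Finset.sum_pair hab, xvt_self]
  ring

lemma xvt_mul_xvt (a b k l : Fin f) :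
    xvt R₀ f a b * xvt R₀ f k l =
      pf4t R₀ f a b k l + (xvt R₀ f a k * xvt R₀ f b l - xvt R₀ f a l * xvt R₀ f b k) := by
  rw [pf4t]
  ring

/-- The variables `x i j` with `i, j ∈ s` together with the variables `t i` with `i ∉ s`. For
`s = {a, b}ᶜ` these are the variables determined by the others once `x a b` is inverted. -/
def eliminatedVars (s : Finset (Fin f)) : Finset (Var f) :=
  ((s ×ˢ s).subtype fun p => p.1 < p.2).disjSum sᶜ

lemma card_eliminatedVars (s : Finset (Fin f)) :
    (eliminatedVars s).card = s.card.choose 2 + (f - s.card) := by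
  rw [eliminatedVars, Finset.card_disjSum, Finset.card_subtype, Finset.card_product_filter_lt,
    Finset.card_compl, Fintype.card_fin]

lemma xvt_mem_supported {s : Finset (Fin f)} {i j : Fin f} (h : i ∉ s ∨ j ∉ s) :
    xvt R₀ f i j ∈ MvPolynomial.supported R₀ (eliminatedVars s : Set (Var f))ᶜ := by
  have X_mem {p : P2 f} (hp : p.1.1 ∉ s ∨ p.1.2 ∉ s) :
      (MvPolynomial.X (Sum.inl p) : MvPolynomial (Var f) R₀) ∈
        MvPolynomial.supported R₀ (eliminatedVars s : Set (Var f))ᶜ :=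
    Algebra.subset_adjoin ⟨_, by simpa [eliminatedVars, imp_iff_not_or] using hp, rfl⟩
  unfold xvt
  split_ifs
  · exact X_mem h
  · exact neg_mem (X_mem h.symm)
  · exact zero_mem _

lemma tvt_mem_supported {s : Finset (Fin f)} {i : Fin f} (hi : i ∈ s) :
    tvt R₀ f i ∈ MvPolynomial.supported R₀ (eliminatedVars s : Set (Var f))ᶜ :=
  Algebra.subset_adjoin ⟨_, by simpa [eliminatedVars] using hi, rfl⟩

variable {P : Ideal (MvPolynomial (Var f) R₀)}

lemma choose_two_le_height_of_X_mem [P.IsPrime]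
    (hP : ∀ p : P2 f, MvPolynomial.X (Sum.inl p) ∈ P) : (f.choose 2 : ℕ∞) ≤ P.height := by
  have card_le := card_le_height_of_forall_mul_X_sub_mem P (eliminatedVars Finset.univ)
    (P.one_notMem) (one_mem _) fun v hv => ⟨0, zero_mem _, ?_⟩
  · simpa [card_eliminatedVars] using card_le
  · rcases v with p | i
    · simpa using hP p
    · simp [eliminatedVars] at hv

lemma exists_xvt_mul_tvt_sub_mem (hP : ItX R₀ f ≤ P) {a b : Fin f} (hab : a ≠ b) :
    ∃ h ∈ MvPolynomial.supported R₀ (eliminatedVars {a, b}ᶜ : Set (Var f))ᶜ,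
      xvt R₀ f a b * tvt R₀ f a - h ∈ P := by
  refine ⟨-∑ i ∈ {a, b}ᶜ, tvt R₀ f i * xvt R₀ f i b, neg_mem (sum_mem fun i hi =>
    mul_mem (tvt_mem_supported hi) (xvt_mem_supported (by simp))), ?_⟩
  rw [xvt_mul_tvt hab, sub_neg_eq_add, sub_add_cancel]
  exact hP (tX_mem_ItX b)

lemma exists_xvt_mul_xvt_sub_mem (hP : Pf4t R₀ f ≤ P) {a b k l : Fin f} (hab : a < b) (hkl : k < l)
    (hk : k ∈ ({a, b}ᶜ : Finset (Fin f))) (hl : l ∈ ({a, b}ᶜ : Finset (Fin f))) :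
    ∃ h ∈ MvPolynomial.supported R₀ (eliminatedVars {a, b}ᶜ : Set (Var f))ᶜ,
      xvt R₀ f a b * xvt R₀ f k l - h ∈ P := by
  refine ⟨xvt R₀ f a k * xvt R₀ f b l - xvt R₀ f a l * xvt R₀ f b k, sub_mem
    (mul_mem (xvt_mem_supported (by simp)) (xvt_mem_supported (by simp)))
    (mul_mem (xvt_mem_supported (by simp)) (xvt_mem_supported (by simp))), ?_⟩
  rw [xvt_mul_xvt, add_sub_cancel_right]
  simp only [Finset.mem_compl, Finset.mem_insert, Finset.mem_singleton, not_or] at hk hl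
  exact hP (pf4t_mem_Pf4t hab hkl (Ne.symm hk.1) (Ne.symm hl.1) (Ne.symm hk.2) (Ne.symm hl.2))

lemma choose_two_add_two_le_height_of_xvt_notMem [P.IsPrime] (hP : Jt R₀ f ≤ P) {a b : Fin f}
    (hab : a < b) (habP : xvt R₀ f a b ∉ P) :
    (((f - 2).choose 2 + 2 : ℕ) : ℕ∞) ≤ P.height := by
  have hPf : Pf4t R₀ f ≤ P := le_sup_left.trans hP
  have hIt : ItX R₀ f ≤ P := le_sup_right.trans hP
  have hcard : (eliminatedVars ({a, b}ᶜ : Finset (Fin f))).card = (f - 2).choose 2 + 2 := by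
    rw [card_eliminatedVars, Finset.card_compl, Finset.card_pair hab.ne, Fintype.card_fin]
    omega
  rw [← hcard]
  refine card_le_height_of_forall_mul_X_sub_mem P _ habP (xvt_mem_supported (by simp)) ?_
  rintro (⟨⟨k, l⟩, hkl⟩ | i) hv
  · obtain ⟨hk, hl⟩ : k ∈ ({a, b}ᶜ : Finset (Fin f)) ∧ l ∈ ({a, b}ᶜ : Finset (Fin f)) := by
      simpa only [eliminatedVars, Finset.inl_mem_disjSum, Finset.mem_subtype,
        Finset.mem_product] using hv
    rw [← xvt_of_lt hkl]
    exact exists_xvt_mul_xvt_sub_mem hPf hab hkl hk hl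
  · obtain rfl | rfl : i = a ∨ i = b := by simpa [eliminatedVars] using hv
    · exact exists_xvt_mul_tvt_sub_mem hIt hab.ne
    · obtain ⟨h, hh, hhP⟩ := exists_xvt_mul_tvt_sub_mem hIt hab.ne'
      rw [Finset.pair_comm] at hh
      refine ⟨-h, neg_mem hh, ?_⟩
      rw [xvt_swap, neg_mul, ← neg_add', neg_mem_iff] at hhP
      rwa [sub_neg_eq_add]

end GenericMatrix

lemma choose_two_sub_two_add_two_le {n : ℕ} (hn : 3 ≤ n) :
    (n - 2).choose 2 + 2 ≤ n.choose 2 := by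
  obtain ⟨m, rfl⟩ := Nat.exists_eq_add_of_le' hn
  simp only [Nat.reduceSubDiff, Nat.choose_succ_succ', Nat.choose_zero_right,
    Nat.choose_one_right]
  omega

theorem stmt_11_general (R₀ : Type u) [CommRing R₀] (f : ℕ) (hf : 3 ≤ f) :
    ((Nat.choose (f - 2) 2 + 2 : ℕ) : ℕ∞) ≤
      idealHeight (MvPolynomial (Var f) R₀) (Jt R₀ f) := by
  refine le_idealHeight fun P _ hJP => ?_
  by_cases hX : ∀ p : P2 f, MvPolynomial.X (Sum.inl p) ∈ P
  · exact (Nat.cast_le.2 (choose_two_sub_two_add_two_le hf)).trans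
      (choose_two_le_height_of_X_mem hX)
  · push Not at hX
    obtain ⟨⟨⟨a, b⟩, hab⟩, habP⟩ := hX
    rw [← xvt_of_lt hab] at habP
    exact choose_two_add_two_le_height_of_xvt_notMem hJP hab habP

/-- for an arbitrary Noetherian ring `R₀` and `f ≥ 3`, the
ideal `J = Pf₄(X) + I₁(tX)` of `𝓡 = R₀[x_{i,j}; t_i]` has height at least
`(f-2 choose 2) + 2`. -/
theorem stmt_11 (R₀ : Type u) [CommRing R₀] [IsNoetherianRing R₀] (f : ℕ) (hf : 3 ≤ f) :
    ((Nat.choose (f - 2) 2 + 2 : ℕ) : ℕ∞) ≤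
      idealHeight (MvPolynomial (Var f) R₀) (Jt R₀ f) :=
  stmt_11_general R₀ f hf

end AluffiStmt
end
end
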